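/- Let W ⊆ ℝ² be a simple polygon with free space F, and let C and C' be distinct connected components of F. Define the mutual interference set I(C, C') = {x ∈ C : D₂(x) ∩ C' ≠ ∅} ∪ {x ∈ C' : D₂(x) ∩ C ≠ ∅}. If S ⊆ F is a set whose distinct points are pairwise at distance at least 4, then S ∩ I(C, C') contains at most one point; in particular, under monochromatic separation 4 the mutual interference set contains at most one start position and at most one target position. -/

import Mathlib

open Metric Set

noncomputable section

/-- The Euclidean plane ℝ². -/
abbrev Plane : Type := EuclideanSpace ℝ (Fin 2)

/-- A simple polygon, given by a simple (injective) closed polygonal curve in the plane. -/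
structure SimplePolygon where
  /-- the parametrization of the boundary curve over `[0,1]` -/
  toFun : ℝ → Plane
  continuous : Continuous toFun
  closed : toFun 0 = toFun 1
  injOn : Set.InjOn toFun (Set.Ico (0 : ℝ) 1)
  /-- the curve is polygonal: it is affine on each piece of some finite partition of `[0,1]` -/
  polygonal : ∃ (n : ℕ) (t : Fin (n + 1) → ℝ),
    t 0 = 0 ∧ t (Fin.last n) = 1 ∧ StrictMono t ∧
    ∀ i : Fin n, ∀ s ∈ Set.Icc (t i.castSucc) (t i.succ),
      toFun s = toFun (t i.castSucc) +
        ((s - t i.castSucc) / (t i.succ - t i.castSucc)) •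
          (toFun (t i.succ) - toFun (t i.castSucc))

/-- The boundary curve of a simple polygon, as a subset of the plane. -/
def SimplePolygon.bdryCurve (P : SimplePolygon) : Set Plane :=
  P.toFun '' Set.Icc 0 1

/-- The closed region bounded by a simple polygon: the union of the boundary curve with
the bounded connected components of its complement. -/
def SimplePolygon.region (P : SimplePolygon) : Set Plane :=
  P.bdryCurve ∪
    {x | x ∉ P.bdryCurve ∧ Bornology.IsBounded (connectedComponentIn P.bdryCurveᶜ x)}

/-- The free space of a simple polygon: all positions whose open unit disc lies in the region. -/
def SimplePolygon.freeSpace (P : SimplePolygon) : Set Plane :=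
  {x | Metric.ball x 1 ⊆ P.region}

/-- `C` is a connected component of the set `F`. -/
def IsFreeComponent (F C : Set Plane) : Prop :=
  ∃ x ∈ F, C = connectedComponentIn F x

/-- The mutual interference set of two free-space components `C` and `C'`: all points of
either component whose aura meets the other component. -/
def mutualInterference (C C' : Set Plane) : Set Plane :=
  {x ∈ C | (Metric.ball x 2 ∩ C').Nonempty} ∪ {x ∈ C' | (Metric.ball x 2 ∩ C).Nonempty}

/-!
A unit disc that cannot move directly from one component of the free space to an interfering
position of the other is stopped by a gate: two points `p` and `q` of the exterior of the polygon,
both at distance less than `1` from a point `w`. As the exterior is connected, the function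
`(z - p) / (z - q)` has a continuous logarithm on the polygon, and following its argument shows that
every connection of the two components inside the polygon crosses the segment from `p` to `q`.
In particular the segment between any two interfering positions `e` and `e'` does. Both are at
distance at least `1` from `p` and `q`, so each point of that gate is closer to `w` than to `e` and
`e'`; applied to the crossing point this gives `dist e w < dist e e' < 2`. All auras around
interfering positions hence contain `w`.
-/

section FillHoles

/-- The set `K` together with the bounded connected components of its complement, so that the
region of a simple polygon is `fillHoles` of its boundary curve. -/
def fillHoles {X : Type*} [TopologicalSpace X] [Bornology X] (K : Set X) : Set X :=
  K ∪ {x | x ∉ K ∧ Bornology.IsBounded (connectedComponentIn Kᶜ x)}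

variable {X : Type*} [TopologicalSpace X] [Bornology X] {K : Set X}

theorem mem_compl_fillHoles {x : X} :
    x ∈ (fillHoles K)ᶜ ↔ x ∈ Kᶜ ∧ ¬ Bornology.IsBounded (connectedComponentIn Kᶜ x) := by
  simp only [fillHoles, mem_compl_iff, mem_union, mem_ofPred_eq]
  tauto

theorem connectedComponentIn_subset_compl_fillHoles {x : X} (hx : x ∈ (fillHoles K)ᶜ) :
    connectedComponentIn Kᶜ x ⊆ (fillHoles K)ᶜ := by
  intro y hy
  rw [mem_compl_fillHoles] at hx ⊢
  exact ⟨connectedComponentIn_subset _ _ hy, connectedComponentIn_eq hy ▸ hx.2⟩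

theorem isClosed_fillHoles [LocallyConnectedSpace X] (hK : IsClosed K) :
    IsClosed (fillHoles K) := by
  refine ⟨isOpen_iff_mem_nhds.2 fun x hx => ?_⟩
  refine Filter.mem_of_superset ?_ (connectedComponentIn_subset_compl_fillHoles hx)
  exact hK.isOpen_compl.connectedComponentIn.mem_nhds
    (mem_connectedComponentIn (mem_compl_fillHoles.1 hx).1)

theorem isPreconnected_compl_closedBall {E : Type*} [NormedAddCommGroup E] [NormedSpace ℝ E]
    (h : 1 < Module.rank ℝ E) (x : E) (R : ℝ) : IsPreconnected (closedBall x R)ᶜ := by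
  rcases lt_or_ge R 0 with hR | hR
  · simpa only [closedBall_eq_empty.2 hR, compl_empty] using isPreconnected_univ
  have hpolar : (closedBall x R)ᶜ = (fun p : E × ℝ => x + p.2 • p.1) '' sphere 0 1 ×ˢ Ioi R := by
    ext y
    simp only [mem_compl_iff, mem_closedBall, not_le, mem_image, mem_prod, mem_sphere_zero_iff_norm,
      mem_Ioi, Prod.exists, dist_eq_norm]
    constructor
    · intro hy
      have hy0 : ‖y - x‖ ≠ 0 := (hR.trans_lt hy).ne'
      exact ⟨‖y - x‖⁻¹ • (y - x), ‖y - x‖, ⟨norm_smul_inv_norm (norm_ne_zero_iff.1 hy0), hy⟩, by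
        rw [smul_inv_smul₀ hy0, add_sub_cancel]⟩
    · rintro ⟨v, t, ⟨hv, ht⟩, rfl⟩
      rwa [add_sub_cancel_left, norm_smul, hv, mul_one, Real.norm_of_nonneg (hR.trans ht.le)]
  rw [hpolar]
  exact ((isPreconnected_sphere h 0 1).prod isPreconnected_Ioi).image _
    (Continuous.continuousOn (by fun_prop))

theorem isPreconnected_compl_fillHoles {E : Type*} [NormedAddCommGroup E] [NormedSpace ℝ E]
    (h : 1 < Module.rank ℝ E) {K : Set E} (hK : Bornology.IsBounded K) :
    IsPreconnected (fillHoles K)ᶜ := by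
  obtain ⟨R, hR⟩ := hK.subset_closedBall 0
  have hfar : ∀ x ∈ (fillHoles K)ᶜ, ∃ y ∈ connectedComponentIn Kᶜ x, y ∈ (closedBall 0 R)ᶜ := by
    intro x hx
    by_contra! hnear
    exact (mem_compl_fillHoles.1 hx).2
      (isBounded_closedBall.subset fun y hy => notMem_compl_iff.1 (hnear y hy))
  refine isPreconnected_of_forall_pair fun x hx y hy => ?_
  obtain ⟨x', hx', hx'far⟩ := hfar x hx
  obtain ⟨y', hy', hy'far⟩ := hfar y hy
  have hy'x' : y' ∈ connectedComponentIn Kᶜ x' :=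
    (isPreconnected_compl_closedBall h 0 R).subset_connectedComponentIn hx'far
      (compl_subset_compl.2 hR) hy'far
  have hxy : connectedComponentIn Kᶜ x = connectedComponentIn Kᶜ y := by
    rw [connectedComponentIn_eq hx', connectedComponentIn_eq hy'x', connectedComponentIn_eq hy']
  exact ⟨connectedComponentIn Kᶜ x, connectedComponentIn_subset_compl_fillHoles hx,
    mem_connectedComponentIn (mem_compl_fillHoles.1 hx).1,
    hxy ▸ mem_connectedComponentIn (mem_compl_fillHoles.1 hy).1,
    isPreconnected_connectedComponentIn⟩

end FillHoles

section Metric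

theorem setOf_ball_subset_eq_compl_thickening {X : Type*} [PseudoMetricSpace X] (r : ℝ)
    (W : Set X) : {x | ball x r ⊆ W} = (thickening r Wᶜ)ᶜ := by
  ext x
  simp only [mem_ofPred_eq, mem_compl_iff, mem_thickening_iff, not_exists, not_and, not_lt]
  exact ⟨fun h o ho => not_lt.1 fun hlt => ho (h (mem_ball'.2 hlt)),
    fun h o ho => by_contra fun hoW => (h o hoW).not_gt (mem_ball'.1 ho)⟩

theorem le_dist_of_notMem_thickening {X : Type*} [PseudoMetricSpace X] {r : ℝ} {O : Set X}
    {c o : X} (hc : c ∉ thickening r O) (ho : o ∈ O) : r ≤ dist c o :=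
  not_lt.1 fun hlt => hc (mem_thickening_iff.2 ⟨o, ho, hlt⟩)

theorem segment_subset_thickening_pair {E : Type*} [SeminormedAddCommGroup E] [NormedSpace ℝ E]
    {r : ℝ} {a b : E} (hab : dist a b < 2 * r) : segment ℝ a b ⊆ thickening r {a, b} := by
  intro z hz
  have hsum := dist_add_dist_of_mem_segment hz
  rw [dist_comm a z] at hsum
  rcases lt_or_ge (dist z a) r with hza | hza
  · exact mem_thickening_iff.2 ⟨a, by simp, hza⟩
  · exact mem_thickening_iff.2 ⟨b, by simp, by linarith⟩

theorem segment_subset_compl_of_notMem_thickening {E : Type*} [SeminormedAddCommGroup E]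
    [NormedSpace ℝ E] {O : Set E} {r : ℝ} {a b : E} (hab : dist a b < 2 * r)
    (ha : a ∉ thickening r O) (hb : b ∉ thickening r O) : segment ℝ a b ⊆ Oᶜ := by
  intro z hz hzO
  obtain ⟨c, rfl | rfl, hzc⟩ := mem_thickening_iff.1 (segment_subset_thickening_pair hab hz)
  · exact ha (mem_thickening_iff.2 ⟨z, hzO, by rwa [dist_comm]⟩)
  · exact hb (mem_thickening_iff.2 ⟨z, hzO, by rwa [dist_comm]⟩)

variable {E : Type*} [NormedAddCommGroup E] [InnerProductSpace ℝ E]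

theorem convex_setOf_dist_lt_dist (a b : E) : Convex ℝ {z | dist a z < dist b z} := by
  have hhalf : {z | dist a z < dist b z} =
      {z | inner ℝ (b - a) z < (‖b‖ ^ 2 - ‖a‖ ^ 2) / 2} := by
    ext z
    rw [mem_ofPred_eq, mem_ofPred_eq, dist_eq_norm, dist_eq_norm,
      ← sq_lt_sq₀ (norm_nonneg _) (norm_nonneg _), norm_sub_sq_real, norm_sub_sq_real,
      inner_sub_left]
    constructor <;> intro h <;> linarith
  rw [hhalf]
  exact convex_halfSpace_lt (innerₛₗ ℝ (b - a)).isLinear _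

theorem dist_lt_dist_of_mem_segment {p q a b z : E} (hp : dist a p < dist b p)
    (hq : dist a q < dist b q) (hz : z ∈ segment ℝ p q) : dist a z < dist b z :=
  (convex_setOf_dist_lt_dist a b).segment_subset hp hq hz

theorem dist_lt_dist_of_mem_segment_of_mem_segment {p q w a b z : E} (hp : dist w p < dist b p)
    (hq : dist w q < dist b q) (hzpq : z ∈ segment ℝ p q) (hzab : z ∈ segment ℝ a b) :
    dist a w < dist a b :=
  calc dist a w ≤ dist a z + dist w z := dist_triangle_right _ _ _
    _ < dist a z + dist b z := by gcongr; exact dist_lt_dist_of_mem_segment hp hq hzpq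
    _ = dist a b := by rw [dist_comm b, dist_add_dist_of_mem_segment hzab]

end Metric

section Logarithm

theorem exists_nonneg_smul_eq_of_neg_div_notMem_slitPlane {u v : ℂ} (hv : v ≠ 0)
    (h : -(u / v) ∉ Complex.slitPlane) : ∃ ρ : ℝ, 0 ≤ ρ ∧ u = ρ • v := by
  rw [Complex.mem_slitPlane_iff_not_le_zero, not_not, Complex.nonpos_iff, Complex.neg_re,
    Complex.neg_im, neg_nonpos, neg_eq_zero] at h
  refine ⟨(u / v).re, h.1, ?_⟩
  rw [Complex.real_smul, ← div_eq_iff hv]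
  exact Complex.ext rfl h.2

theorem mem_segment_of_div_notMem_slitPlane {z p q : ℂ}
    (h : (z - p) / (z - q) ∉ Complex.slitPlane) : z ∈ segment ℝ p q := by
  rcases eq_or_ne q z with rfl | hq
  · exact right_mem_segment ℝ _ _
  rw [← neg_sub q z, div_neg] at h
  obtain ⟨ρ, hρ, hzp⟩ :=
    exists_nonneg_smul_eq_of_neg_div_notMem_slitPlane (sub_ne_zero.2 hq) h
  rw [mem_segment_iff_sameRay, hzp]
  exact SameRay.sameRay_nonneg_smul_left _ hρ

theorem exists_continuousOn_exp_eq_div {O : Set ℂ} (hO : IsOpen O) (hOconn : IsPreconnected O)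
    {p q : ℂ} (hp : p ∈ O) (hq : q ∈ O) :
    ∃ L : ℂ → ℂ, ContinuousOn L Oᶜ ∧ ∀ z ∈ Oᶜ, Complex.exp (L z) = (z - p) / (z - q) := by
  have hne : ∀ {z w : ℂ}, z ∈ Oᶜ → w ∈ O → z - w ≠ 0 := fun hz hw h =>
    hz (sub_eq_zero.1 h ▸ hw)
  refine hOconn.induction₂ (fun p q => ∃ L : ℂ → ℂ, ContinuousOn L Oᶜ ∧
    ∀ z ∈ Oᶜ, Complex.exp (L z) = (z - p) / (z - q)) ?nearby ?trans ?symm hp hq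
  case nearby =>
    intro p hp
    obtain ⟨ε, hε, hball⟩ := Metric.isOpen_iff.1 hO p hp
    filter_upwards [mem_nhdsWithin_of_mem_nhds (ball_mem_nhds p hε)] with q hq
    have hslit : ∀ z ∈ Oᶜ, (z - p) / (z - q) ∈ Complex.slitPlane := fun z hz =>
      by_contra fun h => hz (hball ((convex_ball p ε).segment_subset (mem_ball_self hε) hq
        (mem_segment_of_div_notMem_slitPlane h)))
    refine ⟨fun z => Complex.log ((z - p) / (z - q)), ContinuousOn.clog ?_ hslit, fun z hz =>
      Complex.exp_log (Complex.slitPlane_ne_zero (hslit z hz))⟩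
    exact ContinuousOn.div (by fun_prop) (by fun_prop) fun z hz => hne hz (hball hq)
  case trans =>
    rintro p q r - hq - ⟨L, hL, hexpL⟩ ⟨M, hM, hexpM⟩
    refine ⟨fun z => L z + M z, hL.add hM, fun z hz => ?_⟩
    rw [Complex.exp_add, hexpL z hz, hexpM z hz, div_mul_div_cancel₀ (hne hz hq)]
  case symm =>
    rintro p q - - ⟨L, hL, hexpL⟩
    refine ⟨fun z => -L z, hL.neg, fun z hz => ?_⟩
    rw [Complex.exp_neg, hexpL z hz, inv_div]

theorem eq_of_exp_eq_const {X : Type*} [TopologicalSpace X] {S : Set X} (hS : IsPreconnected S)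
    {g : X → ℂ} (hg : ContinuousOn g S) {k : ℂ} (hk : ∀ x ∈ S, Complex.exp (g x) = k) {a b : X}
    (ha : a ∈ S) (hb : b ∈ S) : g a = g b :=
  Complex.isCoveringMap_exp.constOn_of_comp hS hg
    (fun x hx y hy => Subtype.ext ((hk x hx).trans (hk y hy).symm)) ha hb

theorem log_neg_of_im_pos {w : ℂ} (hw : 0 < w.im) :
    Complex.log (-w) = Complex.log w - Real.pi * Complex.I := by
  rw [Complex.log, Complex.log, norm_neg, Complex.arg_neg_eq_arg_sub_pi_of_im_pos hw]
  push_cast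
  ring

theorem log_neg_of_im_neg {w : ℂ} (hw : w.im < 0) :
    Complex.log (-w) = Complex.log w + Real.pi * Complex.I := by
  rw [Complex.log, Complex.log, norm_neg, Complex.arg_neg_eq_arg_add_pi_of_im_neg hw]
  push_cast
  ring

-- Along `S` the function `L` runs parallel to `log ∘ exp ∘ L`, along `T` to `log ∘ (-exp) ∘ L`.
-- If `exp ∘ L` passed from the upper to the lower half-plane, these branches would drift apart by
-- `2πi`.
theorem im_exp_nonneg_of_mem_slitPlane {X : Type*} [TopologicalSpace X] {S T : Set X}
    (hS : IsPreconnected S) (hT : IsPreconnected T) {L : X → ℂ} (hLS : ContinuousOn L S)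
    (hLT : ContinuousOn L T) (hslitS : ∀ x ∈ S, Complex.exp (L x) ∈ Complex.slitPlane)
    (hslitT : ∀ x ∈ T, -Complex.exp (L x) ∈ Complex.slitPlane) {a b : X} (ha : a ∈ S ∩ T)
    (hb : b ∈ S ∩ T) (hpos : 0 < (Complex.exp (L a)).im) : 0 ≤ (Complex.exp (L b)).im := by
  by_contra! hneg
  have hSconst : L a - Complex.log (Complex.exp (L a)) = L b - Complex.log (Complex.exp (L b)) := by
    refine eq_of_exp_eq_const (k := 1) (g := fun x => L x - Complex.log (Complex.exp (L x))) hS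
      (hLS.sub (hLS.cexp.clog hslitS)) (fun x _ => ?_) ha.1 hb.1
    rw [Complex.exp_sub, Complex.exp_log (Complex.exp_ne_zero _), div_self (Complex.exp_ne_zero _)]
  have hTconst :
      L a - Complex.log (-Complex.exp (L a)) = L b - Complex.log (-Complex.exp (L b)) := by
    refine eq_of_exp_eq_const (k := -1) (g := fun x => L x - Complex.log (-Complex.exp (L x))) hT
      (hLT.sub (hLT.cexp.neg.clog hslitT)) (fun x _ => ?_) ha.2 hb.2
    rw [Complex.exp_sub, Complex.exp_log (neg_ne_zero.2 (Complex.exp_ne_zero _)), div_neg,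
      div_self (Complex.exp_ne_zero _)]
  rw [log_neg_of_im_pos hpos, log_neg_of_im_neg hneg] at hTconst
  exact Complex.two_pi_I_ne_zero (by linear_combination hTconst - hSconst)

end Logarithm

theorem isPreconnected_of_isPreconnected_fibers {X Y : Type*} [TopologicalSpace X]
    [TopologicalSpace Y] [T2Space Y] {K : Set X} (hK : IsCompact K) {f : X → Y} (hf : Continuous f)
    (himage : IsPreconnected (f '' K)) (hfiber : ∀ y, IsPreconnected (K ∩ f ⁻¹' {y})) :
    IsPreconnected K := by
  rw [isPreconnected_closed_iff]
  rintro u v hu hv hcover ⟨a, haK, hau⟩ ⟨b, hbK, hbv⟩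
  obtain ⟨y, -, ⟨a', ⟨ha'K, ha'u⟩, ha'⟩, ⟨b', ⟨hb'K, hb'v⟩, hb'⟩⟩ :=
    isPreconnected_closed_iff.1 himage (f '' (K ∩ u)) (f '' (K ∩ v))
      ((hK.inter_right hu).image hf).isClosed ((hK.inter_right hv).image hf).isClosed
      (by rw [← image_union, ← inter_union_distrib_left, inter_eq_left.2 hcover])
      ⟨f a, mem_image_of_mem f haK, mem_image_of_mem f ⟨haK, hau⟩⟩
      ⟨f b, mem_image_of_mem f hbK, mem_image_of_mem f ⟨hbK, hbv⟩⟩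
  obtain ⟨c, hc, hcuv⟩ := isPreconnected_closed_iff.1 (hfiber y) u v hu hv
    (inter_subset_left.trans hcover) ⟨a', ⟨ha'K, ha'⟩, ha'u⟩ ⟨b', ⟨hb'K, hb'⟩, hb'v⟩
  exact ⟨c, hc.1, hcuv⟩

theorem isPreconnected_inter_re_preimage_of_ordConnected {K : Set ℂ} {x : ℝ}
    (h : {y : ℝ | (⟨x, y⟩ : ℂ) ∈ K}.OrdConnected) :
    IsPreconnected (K ∩ Complex.re ⁻¹' {x}) := by
  have himage : K ∩ Complex.re ⁻¹' {x} = (fun y : ℝ => (⟨x, y⟩ : ℂ)) '' {y | ⟨x, y⟩ ∈ K} := by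
    ext c
    constructor
    · rintro ⟨hc, rfl⟩
      exact ⟨c.im, hc, rfl⟩
    · rintro ⟨y, hy, rfl⟩
      exact ⟨hy, rfl⟩
  rw [himage]
  refine h.isPreconnected.image _ (Continuous.continuousOn ?_)
  simp only [Complex.mk_eq_add_mul_I]
  fun_prop

section Shadow

/-- The shadow of `U` for a ball of radius `r` in the direction `v`: the centres `c` from which a
ball of radius `r` meets `U` now or after a translation by a nonnegative multiple of `-v`. A ball
that must stay on the side of `U` opposite to `v` cannot be centred in the shadow. -/
def shadow {E : Type*} [SeminormedAddCommGroup E] [NormedSpace ℝ E] (r : ℝ) (v : E) (U : Set E) :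
    Set E :=
  {c | ∃ t : ℝ, 0 ≤ t ∧ c - t • v ∈ thickening r U}

section NormedSpace

variable {E : Type*} [SeminormedAddCommGroup E] [NormedSpace ℝ E] {r : ℝ} {v c : E} {U : Set E}

theorem isOpen_shadow : IsOpen (shadow r v U) := by
  have hunion : shadow r v U = ⋃ t ∈ Ici (0 : ℝ), (fun c => c - t • v) ⁻¹' thickening r U := by
    ext c
    simp [shadow]
  rw [hunion]
  exact isOpen_biUnion fun t _ => isOpen_thickening.preimage (by fun_prop)

theorem thickening_subset_shadow : thickening r U ⊆ shadow r v U :=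
  fun c hc => ⟨0, le_rfl, by rwa [zero_smul, sub_zero]⟩

theorem add_smul_mem_shadow (hc : c ∈ shadow r v U) {s : ℝ} (hs : 0 ≤ s) :
    c + s • v ∈ shadow r v U := by
  obtain ⟨t, ht, hct⟩ := hc
  exact ⟨t + s, by positivity, by rwa [add_smul, add_sub_add_right_eq_sub]⟩

end NormedSpace

theorem mem_thickening_of_mem_shadow {E : Type*} [NormedAddCommGroup E] [InnerProductSpace ℝ E]
    {r : ℝ} {v c : E} {U : Set E} (hU : ∀ o ∈ U, inner ℝ c v ≤ inner ℝ o v)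
    (hc : c ∈ shadow r v U) : c ∈ thickening r U := by
  obtain ⟨t, ht, hct⟩ := hc
  obtain ⟨o, ho, hlt⟩ := mem_thickening_iff.1 hct
  refine mem_thickening_iff.2 ⟨o, ho, lt_of_le_of_lt ?_ hlt⟩
  have hinner : inner ℝ (c - o) (t • v) ≤ 0 := by
    rw [inner_smul_right, inner_sub_left]
    exact mul_nonpos_of_nonneg_of_nonpos ht (sub_nonpos.2 (hU o ho))
  rw [dist_eq_norm, dist_eq_norm, sub_right_comm, ← sq_le_sq₀ (norm_nonneg _) (norm_nonneg _),
    norm_sub_sq_real (c - o)]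
  linarith [sq_nonneg ‖t • v‖]

end Shadow

section Gate

/-- The centres from which an open disc of radius `r` lies on or above an obstacle it has to pass
below. Obstacles on the real axis count as lying in the upper half-plane. -/
def upperShadow (O : Set ℂ) (r : ℝ) : Set ℂ :=
  shadow r Complex.I {o ∈ O | 0 ≤ o.im}

/-- The centres from which an open disc of radius `r` lies on or below an obstacle it has to pass
above. -/
def lowerShadow (O : Set ℂ) (r : ℝ) : Set ℂ :=
  shadow r (-Complex.I) {o ∈ O | o.im < 0}

/-- The positions of a disc of radius `r` over the real interval `[a, b]` at which it passes below
the obstacles of the upper half-plane and above those of the lower half-plane. The bound on the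
imaginary part makes the corridor compact. -/
def corridor (O : Set ℂ) (r a b : ℝ) : Set ℂ :=
  (Icc a b ×ℂ Icc (-r) r) \ (upperShadow O r ∪ lowerShadow O r)

/-- A gate that blocks discs of radius `r` from moving along the real interval `[a, b]`: two points
`p` and `q` of `O` on different sides of the real axis, both at distance less than `r` from `w`,
such that the segment from `p` to `q` crosses the open interval `(a, b)`. -/
structure IsGate (O : Set ℂ) (r a b : ℝ) (p q w : ℂ) : Prop where
  left_mem : p ∈ O
  right_mem : q ∈ O
  left_im : 0 ≤ p.im
  right_im : q.im < 0
  dist_left : dist w p < r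
  dist_right : dist w q < r
  crosses : ∃ x ∈ Ioo a b, (x : ℂ) ∈ segment ℝ p q

variable {O : Set ℂ} {r a b : ℝ}

theorem dist_le_dist_of_re_eq {z w p : ℂ} (hre : z.re = w.re)
    (him : |z.im - p.im| ≤ |w.im - p.im|) : dist z p ≤ dist w p := by
  rw [Complex.dist_eq_re_im, Complex.dist_eq_re_im, hre]
  exact Real.sqrt_le_sqrt (add_le_add_right (sq_le_sq.2 him) _)

theorem exists_abs_sub_le_abs_sub {y₁ y₂ s t : ℝ} (hy : y₁ ≤ y₂) (hst : t ≤ s) :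
    ∃ y, |y - s| ≤ |y₁ - s| ∧ |y - t| ≤ |y₂ - t| := by
  rcases lt_or_ge ((s + t) / 2) y₁ with h₁ | h₁
  · exact ⟨y₁, le_rfl, by grind⟩
  rcases lt_or_ge y₂ ((s + t) / 2) with h₂ | h₂
  · exact ⟨y₂, by grind, le_rfl⟩
  · exact ⟨(s + t) / 2, by grind, by grind⟩

theorem exists_dist_lt_of_mem_shadows {c : ℂ} (hupper : c ∈ upperShadow O r)
    (hlower : c ∈ lowerShadow O r) :
    ∃ p ∈ O, ∃ q ∈ O, ∃ w : ℂ, 0 ≤ p.im ∧ q.im < 0 ∧ w.re = c.re ∧ dist w p < r ∧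
      dist w q < r := by
  obtain ⟨t, ht, hct⟩ := hupper
  obtain ⟨s, hs, hcs⟩ := hlower
  obtain ⟨p, ⟨hp, hpim⟩, htp⟩ := mem_thickening_iff.1 hct
  obtain ⟨q, ⟨hq, hqim⟩, hsq⟩ := mem_thickening_iff.1 hcs
  have him : (c - t • Complex.I).im ≤ (c - s • -Complex.I).im := by
    simp only [Complex.sub_im, Complex.smul_im, Complex.neg_im, Complex.I_im, smul_eq_mul]
    linarith
  obtain ⟨y, hyp, hyq⟩ := exists_abs_sub_le_abs_sub him (hqim.le.trans hpim)
  exact ⟨p, hp, q, hq, ⟨c.re, y⟩, hpim, hqim, rfl,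
    (dist_le_dist_of_re_eq (by simp) hyp).trans_lt htp,
    (dist_le_dist_of_re_eq (by simp) hyq).trans_lt hsq⟩

theorem exists_mem_segment_im_eq_zero {p q : ℂ} (hp : 0 ≤ p.im) (hq : q.im ≤ 0) :
    ∃ x : ℝ, (x : ℂ) ∈ segment ℝ p q := by
  obtain ⟨z, hz, hzim⟩ := (convex_segment p q).isPreconnected.intermediate_value
    (right_mem_segment ℝ p q) (left_mem_segment ℝ p q) Complex.continuous_im.continuousOn ⟨hq, hp⟩
  exact ⟨z.re, by rwa [(Complex.ext rfl hzim.symm : (z.re : ℂ) = z)]⟩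

theorem mem_Ioo_of_dist_lt_dist {w : ℂ} {x : ℝ} (hw : w.re ∈ Icc a b)
    (ha : dist w (x : ℂ) < dist (a : ℂ) x) (hb : dist w (x : ℂ) < dist (b : ℂ) x) :
    x ∈ Ioo a b := by
  have hre : |w.re - x| ≤ dist w (x : ℂ) := by
    simpa [Complex.dist_eq] using Complex.abs_re_le_norm (w - x)
  rw [Complex.isometry_ofReal.dist_eq, Real.dist_eq] at ha hb
  have hwa := hre.trans_lt ha
  have hwb := hre.trans_lt hb
  refine ⟨not_le.1 fun hxa => ?_, not_le.1 fun hbx => ?_⟩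
  · rw [abs_of_nonneg (sub_nonneg.2 hxa)] at hwa
    linarith [(abs_lt.1 hwa).2, hw.1]
  · rw [abs_of_nonpos (sub_nonpos.2 hbx)] at hwb
    linarith [(abs_lt.1 hwb).1, hw.2]

theorem exists_isGate_of_mem_shadows (ha : (a : ℂ) ∉ thickening r O)
    (hb : (b : ℂ) ∉ thickening r O) {c : ℂ} (hc : c.re ∈ Icc a b) (hupper : c ∈ upperShadow O r)
    (hlower : c ∈ lowerShadow O r) : ∃ p q w, IsGate O r a b p q w := by
  obtain ⟨p, hp, q, hq, w, hpim, hqim, hwc, hwp, hwq⟩ :=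
    exists_dist_lt_of_mem_shadows hupper hlower
  obtain ⟨x, hx⟩ := exists_mem_segment_im_eq_zero hpim hqim.le
  have hcloser : ∀ y ∉ thickening r O, dist w (x : ℂ) < dist y x := fun y hy =>
    dist_lt_dist_of_mem_segment (hwp.trans_le (le_dist_of_notMem_thickening hy hp))
      (hwq.trans_le (le_dist_of_notMem_thickening hy hq)) hx
  exact ⟨p, q, w, hp, hq, hpim, hqim, hwp, hwq, x,
    mem_Ioo_of_dist_lt_dist (hwc ▸ hc) (hcloser a ha) (hcloser b hb), hx⟩

theorem corridor_subset_compl_thickening : corridor O r a b ⊆ (thickening r O)ᶜ := by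
  intro c hc hcO
  obtain ⟨o, ho, hlt⟩ := mem_thickening_iff.1 hcO
  rcases le_or_gt 0 o.im with him | him
  · exact hc.2 (Or.inl (thickening_subset_shadow (mem_thickening_iff.2 ⟨o, ⟨ho, him⟩, hlt⟩)))
  · exact hc.2 (Or.inr (thickening_subset_shadow (mem_thickening_iff.2 ⟨o, ⟨ho, him⟩, hlt⟩)))

theorem notMem_upperShadow {c : ℂ} (hc : c ∉ thickening r O) (him : c.im ≤ 0) :
    c ∉ upperShadow O r := fun h =>
  hc (thickening_subset_of_subset r (sep_subset _ _)
    (mem_thickening_of_mem_shadow (fun o ho => by simpa using him.trans ho.2) h))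

theorem notMem_lowerShadow {c : ℂ} (hc : c ∉ thickening r O) (him : 0 ≤ c.im) :
    c ∉ lowerShadow O r := fun h =>
  hc (thickening_subset_of_subset r (sep_subset _ _)
    (mem_thickening_of_mem_shadow (fun o ho => by simpa using ho.2.le.trans him) h))

theorem notMem_upperShadow_of_im_le {c : ℂ} (hc : c.im ≤ -r) : c ∉ upperShadow O r := by
  rintro ⟨t, ht, hct⟩
  obtain ⟨o, ⟨-, ho⟩, hlt⟩ := mem_thickening_iff.1 hct
  have him := (Complex.abs_im_le_norm (c - t • Complex.I - o)).trans_lt (dist_eq_norm _ o ▸ hlt)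
  simp only [Complex.sub_im, Complex.smul_im, Complex.I_im, smul_eq_mul, mul_one] at him
  linarith [(abs_lt.1 him).1]

theorem notMem_lowerShadow_of_le_im {c : ℂ} (hc : r ≤ c.im) : c ∉ lowerShadow O r := by
  rintro ⟨t, ht, hct⟩
  obtain ⟨o, ⟨-, ho⟩, hlt⟩ := mem_thickening_iff.1 hct
  have him := (Complex.abs_im_le_norm (c - t • -Complex.I - o)).trans_lt (dist_eq_norm _ o ▸ hlt)
  simp only [Complex.sub_im, Complex.smul_im, Complex.neg_im, Complex.I_im, smul_eq_mul, mul_neg,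
    mul_one] at him
  linarith [(abs_lt.1 him).2]

theorem exists_mem_corridor (hr : 0 ≤ r) {x : ℝ} (hx : x ∈ Icc a b)
    (hdisj : ∀ c : ℂ, c.re ∈ Icc a b → c ∈ upperShadow O r → c ∉ lowerShadow O r) :
    ∃ c ∈ corridor O r a b, c.re = x := by
  have hvertical : IsPreconnected ((Icc a b ×ℂ Icc (-r) r) ∩ Complex.re ⁻¹' {x}) :=
    isPreconnected_inter_re_preimage_of_ordConnected
      ⟨fun _ h₁ _ h₂ _ h => ⟨h₁.1, h₁.2.1.trans h.1, h.2.trans h₂.2.2⟩⟩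
  have hmem : ∀ y ∈ Icc (-r) r, (⟨x, y⟩ : ℂ) ∈ (Icc a b ×ℂ Icc (-r) r) ∩ Complex.re ⁻¹' {x} :=
    fun y hy => ⟨⟨hx, hy⟩, rfl⟩
  have htop := hmem r (right_mem_Icc.2 (by linarith))
  have hbottom := hmem (-r) (left_mem_Icc.2 (by linarith))
  by_contra! hnone
  have hcover : (Icc a b ×ℂ Icc (-r) r) ∩ Complex.re ⁻¹' {x} ⊆ upperShadow O r ∪ lowerShadow O r :=
    fun c hc => by_contra fun h => hnone c ⟨hc.1, h⟩ hc.2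
  obtain ⟨c, hc, hupper, hlower⟩ := hvertical _ _ isOpen_shadow isOpen_shadow hcover
    ⟨_, htop, (hcover htop).resolve_right (notMem_lowerShadow_of_le_im le_rfl)⟩
    ⟨_, hbottom, (hcover hbottom).resolve_left (notMem_upperShadow_of_im_le le_rfl)⟩
  exact hdisj c hc.1.1 hupper hlower

theorem isCompact_corridor : IsCompact (corridor O r a b) :=
  (isCompact_Icc.reProdIm isCompact_Icc).diff (isOpen_shadow.union isOpen_shadow)

theorem ordConnected_setOf_mk_mem_corridor (x : ℝ) :
    {y : ℝ | (⟨x, y⟩ : ℂ) ∈ corridor O r a b}.OrdConnected := by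
  refine ⟨fun y₁ hy₁ y₂ hy₂ y hy => ⟨⟨hy₁.1.1, hy₁.1.2.1.trans hy.1, hy.2.trans hy₂.1.2.2⟩, ?_⟩⟩
  rintro (hupper | hlower)
  · refine hy₂.2 (Or.inl ?_)
    rw [show (⟨x, y₂⟩ : ℂ) = ⟨x, y⟩ + (y₂ - y) • Complex.I by
      apply Complex.ext <;> simp]
    exact add_smul_mem_shadow hupper (sub_nonneg.2 hy.2)
  · refine hy₁.2 (Or.inr ?_)
    rw [show (⟨x, y₁⟩ : ℂ) = ⟨x, y⟩ + (y - y₁) • -Complex.I by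
      apply Complex.ext <;> simp]
    exact add_smul_mem_shadow hlower (sub_nonneg.2 hy.1)

theorem isPreconnected_corridor (hr : 0 ≤ r)
    (hdisj : ∀ c : ℂ, c.re ∈ Icc a b → c ∈ upperShadow O r → c ∉ lowerShadow O r) :
    IsPreconnected (corridor O r a b) := by
  have himage : Complex.re '' corridor O r a b = Icc a b :=
    Subset.antisymm (image_subset_iff.2 fun c hc => hc.1.1) fun x hx =>
      exists_mem_corridor hr hx hdisj
  exact isPreconnected_of_isPreconnected_fibers isCompact_corridor Complex.continuous_re
    (himage ▸ isPreconnected_Icc) fun x =>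
      isPreconnected_inter_re_preimage_of_ordConnected (ordConnected_setOf_mk_mem_corridor x)

theorem ofReal_mem_corridor (hr : 0 ≤ r) {x : ℝ} (hx : x ∈ Icc a b)
    (hfree : (x : ℂ) ∉ thickening r O) : (x : ℂ) ∈ corridor O r a b := by
  refine ⟨⟨by simpa using hx, by simpa using hr⟩, ?_⟩
  rintro (hupper | hlower)
  · exact notMem_upperShadow hfree (by simp) hupper
  · exact notMem_lowerShadow hfree (by simp) hlower

theorem exists_isGate_of_notMem_connectedComponentIn (hr : 0 ≤ r) (hab : a ≤ b)
    (ha : (a : ℂ) ∉ thickening r O) (hb : (b : ℂ) ∉ thickening r O)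
    (hsep : (b : ℂ) ∉ connectedComponentIn (thickening r O)ᶜ a) :
    ∃ p q w, IsGate O r a b p q w := by
  by_contra! hnone
  refine hsep (IsPreconnected.subset_connectedComponentIn (isPreconnected_corridor hr ?_)
    (ofReal_mem_corridor hr (left_mem_Icc.2 hab) ha) corridor_subset_compl_thickening
    (ofReal_mem_corridor hr (right_mem_Icc.2 hab) hb))
  intro c hc hupper hlower
  obtain ⟨p, q, w, hgate⟩ := exists_isGate_of_mem_shadows ha hb hc hupper hlower
  exact hnone p q w hgate

theorem im_ofReal_sub_div_sub {p q : ℂ} {x : ℝ} (hx : (x : ℂ) ∈ segment ℝ p q) (t : ℝ) :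
    ((t - p) / (t - q)).im = (p.im - q.im) * (x - t) / Complex.normSq (t - q) := by
  obtain ⟨u, v, -, -, huv, hx⟩ := hx
  have hre : u * p.re + v * q.re = x := by simpa using congrArg Complex.re hx
  have him : u * p.im + v * q.im = 0 := by simpa using congrArg Complex.im hx
  rw [Complex.div_im, ← sub_div]
  congr 1
  simp only [Complex.sub_im, Complex.sub_re, Complex.ofReal_im, Complex.ofReal_re]
  linear_combination (p.im - q.im) * hre - (p.re - q.re) * him -
    (p.im * q.re - p.re * q.im) * huv

theorem neg_ofReal_sub_div_sub_mem_slitPlane {p q : ℂ} {t : ℝ} (hp : 0 ≤ p.im) (hq : q.im < 0)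
    (htp : (t : ℂ) ≠ p) : -((t - p) / (t - q)) ∈ Complex.slitPlane := by
  have htq : (t : ℂ) - q ≠ 0 := fun h => hq.ne (by simpa using congrArg Complex.im h)
  by_contra hnot
  obtain ⟨ρ, hρ, htpq⟩ := exists_nonneg_smul_eq_of_neg_div_notMem_slitPlane htq hnot
  have him : p.im = ρ * q.im := by simpa using congrArg Complex.im htpq
  have hρ0 : ρ = 0 := by nlinarith
  exact htp (sub_eq_zero.1 (by rw [htpq, hρ0, zero_smul]))

theorem IsGate.notMem_of_isPreconnected {p q w : ℂ} (hgate : IsGate O r a b p q w)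
    (hO : IsOpen O) (hOconn : IsPreconnected O) (hfree : ∀ t ∈ Icc a b, (t : ℂ) ∉ O) {S : Set ℂ}
    (hS : IsPreconnected S) (hSO : S ⊆ Oᶜ) (hdisj : Disjoint S (segment ℝ p q))
    (haS : (a : ℂ) ∈ S) : (b : ℂ) ∉ S := by
  intro hbS
  obtain ⟨x, ⟨hax, hxb⟩, hx⟩ := hgate.crosses
  have hne : ∀ t : ℝ, (t : ℂ) - q ≠ 0 := fun t h =>
    hgate.right_im.ne (by simpa using congrArg Complex.im h)
  have hpq : 0 < p.im - q.im := sub_pos.2 (hgate.right_im.trans_le hgate.left_im)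
  obtain ⟨L, hL, hexpL⟩ := exists_continuousOn_exp_eq_div hO hOconn hgate.left_mem hgate.right_mem
  have hTO : ((↑) : ℝ → ℂ) '' Icc a b ⊆ Oᶜ := image_subset_iff.2 hfree
  have hpos : 0 < (Complex.exp (L a)).im := by
    rw [hexpL a (hSO haS), im_ofReal_sub_div_sub hx]
    exact div_pos (mul_pos hpq (sub_pos.2 hax)) (Complex.normSq_pos.2 (hne a))
  have hneg : (Complex.exp (L b)).im < 0 := by
    rw [hexpL b (hSO hbS), im_ofReal_sub_div_sub hx]
    exact div_neg_of_neg_of_pos (mul_neg_of_pos_of_neg hpq (sub_neg.2 hxb))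
      (Complex.normSq_pos.2 (hne b))
  refine hneg.not_ge (im_exp_nonneg_of_mem_slitPlane (T := ((↑) : ℝ → ℂ) '' Icc a b) hS
    (isPreconnected_Icc.image _ Complex.continuous_ofReal.continuousOn) (hL.mono hSO)
    (hL.mono hTO) (fun z hz => ?_) ?_ ⟨haS, mem_image_of_mem _ (left_mem_Icc.2 (hax.trans hxb).le)⟩
    ⟨hbS, mem_image_of_mem _ (right_mem_Icc.2 (hax.trans hxb).le)⟩ hpos)
  · rw [hexpL z (hSO hz)]
    exact by_contra fun h =>
      hdisj.notMem_of_mem_left hz (mem_segment_of_div_notMem_slitPlane h)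
  · rintro _ ⟨t, ht, rfl⟩
    rw [hexpL t (hfree t ht)]
    exact neg_ofReal_sub_div_sub_mem_slitPlane hgate.left_im hgate.right_im
      fun h => hfree t ht (h ▸ hgate.left_mem)

theorem IsGate.segment_subset_thickening {p q w : ℂ} (hgate : IsGate O r a b p q w) :
    segment ℝ p q ⊆ thickening r O := by
  have hpq : dist p q < 2 * r := by
    linarith [dist_triangle_left p q w, hgate.dist_left, hgate.dist_right]
  exact (segment_subset_thickening_pair hpq).trans
    (thickening_subset_of_subset r (pair_subset hgate.left_mem hgate.right_mem))

theorem IsGate.dist_lt_dist_of_notMem_thickening {p q w c : ℂ} (hgate : IsGate O r a b p q w)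
    (hc : c ∉ thickening r O) : dist w p < dist c p ∧ dist w q < dist c q :=
  ⟨hgate.dist_left.trans_le (le_dist_of_notMem_thickening hc hgate.left_mem),
    hgate.dist_right.trans_le (le_dist_of_notMem_thickening hc hgate.right_mem)⟩

end Gate

section Separation

theorem IsGate.exists_mem_segment_inter_segment {O : Set ℂ} {r a b : ℝ} {p q w : ℂ}
    (hgate : IsGate O r a b p q w) (hO : IsOpen O) (hOconn : IsPreconnected O)
    (hfree : ∀ t ∈ Icc a b, (t : ℂ) ∉ O) {C C' : Set ℂ} (hC : IsPreconnected C)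
    (hC' : IsPreconnected C') (hCO : C ⊆ (thickening r O)ᶜ) (hCO' : C' ⊆ (thickening r O)ᶜ)
    (ha : (a : ℂ) ∈ C) (hb : (b : ℂ) ∈ C') {e e' : ℂ} (he : e ∈ C) (he' : e' ∈ C')
    (hee' : dist e e' < 2 * r) : ∃ z ∈ segment ℝ e e', z ∈ segment ℝ p q := by
  have hr : 0 < r := dist_nonneg.trans_lt hgate.dist_left
  have hOthick : (thickening r O)ᶜ ⊆ Oᶜ := compl_subset_compl.2 (self_subset_thickening hr O)
  have hpath : IsPreconnected (C ∪ segment ℝ e e' ∪ C') :=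
    (hC.union e he (left_mem_segment ℝ e e') (convex_segment e e').isPreconnected).union e'
      (Or.inr (right_mem_segment ℝ e e')) he' hC'
  have hpathO : C ∪ segment ℝ e e' ∪ C' ⊆ Oᶜ :=
    union_subset (union_subset (hCO.trans hOthick)
      (segment_subset_compl_of_notMem_thickening hee' (hCO he) (hCO' he'))) (hCO'.trans hOthick)
  obtain ⟨z, hz, hzpq⟩ : ((C ∪ segment ℝ e e' ∪ C') ∩ segment ℝ p q).Nonempty := by
    rw [← not_disjoint_iff_nonempty_inter]
    intro hdisj
    exact hgate.notMem_of_isPreconnected hO hOconn hfree hpath hpathO hdisj (Or.inl (Or.inl ha))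
      (Or.inr hb)
  rcases hz with (hzC | hzee') | hzC'
  · exact absurd (hgate.segment_subset_thickening hzpq) (hCO hzC)
  · exact ⟨z, hzee', hzpq⟩
  · exact absurd (hgate.segment_subset_thickening hzpq) (hCO' hzC')

theorem exists_dist_lt_dist_of_ofReal {O : Set ℂ} (hO : IsOpen O) (hOconn : IsPreconnected O)
    {r a b : ℝ} (hab : a ≤ b) (hba : b - a < 2 * r) (ha : (a : ℂ) ∉ thickening r O)
    (hb : (b : ℂ) ∉ thickening r O)
    (hsep : (b : ℂ) ∉ connectedComponentIn (thickening r O)ᶜ a) :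
    ∃ w, ∀ e ∈ connectedComponentIn (thickening r O)ᶜ a,
      ∀ e' ∈ connectedComponentIn (thickening r O)ᶜ b,
        dist e e' < 2 * r → dist e w < dist e e' ∧ dist e' w < dist e e' := by
  obtain ⟨p, q, w, hgate⟩ :=
    exists_isGate_of_notMem_connectedComponentIn (by linarith) hab ha hb hsep
  have hfree : ∀ t ∈ Icc a b, (t : ℂ) ∉ O := by
    intro t ht
    refine segment_subset_compl_of_notMem_thickening (r := r) ?_ ha hb ?_
    · rwa [Complex.isometry_ofReal.dist_eq, Real.dist_eq, abs_sub_comm,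
        abs_of_nonneg (sub_nonneg.2 hab)]
    · have himage := image_segment ℝ Complex.ofRealCLM.toLinearMap.toAffineMap a b
      exact himage ▸ mem_image_of_mem _ (segment_eq_Icc hab ▸ ht)
  refine ⟨w, fun e he e' he' hee' => ?_⟩
  obtain ⟨z, hzee', hzpq⟩ := hgate.exists_mem_segment_inter_segment hO hOconn hfree
    isPreconnected_connectedComponentIn isPreconnected_connectedComponentIn
    (connectedComponentIn_subset _ _) (connectedComponentIn_subset _ _)
    (mem_connectedComponentIn ha) (mem_connectedComponentIn hb) he he' hee'
  obtain ⟨hep, heq⟩ := hgate.dist_lt_dist_of_notMem_thickening (connectedComponentIn_subset _ _ he)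
  obtain ⟨hep', heq'⟩ :=
    hgate.dist_lt_dist_of_notMem_thickening (connectedComponentIn_subset _ _ he')
  refine ⟨dist_lt_dist_of_mem_segment_of_mem_segment hep' heq' hzpq hzee', ?_⟩
  rw [dist_comm e e']
  exact dist_lt_dist_of_mem_segment_of_mem_segment hep heq hzpq (segment_symm ℝ e e' ▸ hzee')

theorem exists_isometryEquiv_eq_ofReal_dist (a b : Plane) :
    ∃ T : Plane ≃ᵢ ℂ, T a = (0 : ℝ) ∧ T b = dist a b := by
  let φ : Plane ≃ₗᵢ[ℝ] ℂ := Complex.orthonormalBasisOneI.repr.symm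
  obtain ⟨u, hu, hrot⟩ := Complex.exists_norm_eq_mul_self (φ (b - a))
  refine ⟨((IsometryEquiv.subRight a).trans φ.toIsometryEquiv).trans
    (rotation ⟨u, mem_sphere_zero_iff_norm.2 hu⟩).toIsometryEquiv, ?_, ?_⟩
  · simp
  · rw [dist_comm, dist_eq_norm, ← φ.norm_map, hrot]
    rfl

theorem image_compl_thickening {X Y : Type*} [PseudoMetricSpace X] [PseudoMetricSpace Y]
    (T : X ≃ᵢ Y) (r : ℝ) (O : Set X) : T '' (thickening r O)ᶜ = (thickening r (T '' O))ᶜ := by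
  rw [image_compl_eq T.bijective]
  congr 1
  ext y
  obtain ⟨x, rfl⟩ := T.surjective y
  simp only [T.injective.mem_set_image, mem_thickening_iff, exists_mem_image, T.dist_eq]

theorem exists_dist_lt_dist_of_notMem_connectedComponentIn {O : Set Plane} (hO : IsOpen O)
    (hOconn : IsPreconnected O) {r : ℝ} {a b : Plane} (hab : dist a b < 2 * r)
    (ha : a ∉ thickening r O) (hb : b ∉ thickening r O)
    (hsep : b ∉ connectedComponentIn (thickening r O)ᶜ a) :
    ∃ w, ∀ e ∈ connectedComponentIn (thickening r O)ᶜ a,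
      ∀ e' ∈ connectedComponentIn (thickening r O)ᶜ b,
        dist e e' < 2 * r → dist e w < dist e e' ∧ dist e' w < dist e e' := by
  obtain ⟨T, hTa, hTb⟩ := exists_isometryEquiv_eq_ofReal_dist a b
  have hfree : ∀ x, T x ∈ (thickening r (T '' O))ᶜ ↔ x ∈ (thickening r O)ᶜ := fun x => by
    rw [← image_compl_thickening, T.injective.mem_set_image]
  have hcomp : ∀ {x y}, x ∉ thickening r O → (T y ∈ connectedComponentIn (thickening r (T '' O))ᶜ
      (T x) ↔ y ∈ connectedComponentIn (thickening r O)ᶜ x) := fun {x y} hx => by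
    rw [← image_compl_thickening, ← T.coe_toHomeomorph,
      ← T.toHomeomorph.image_connectedComponentIn hx, T.toHomeomorph.injective.mem_set_image]
  obtain ⟨w, hw⟩ := exists_dist_lt_dist_of_ofReal (T.toHomeomorph.isOpenMap O hO)
    (hOconn.image T T.continuous.continuousOn) (a := 0) (b := dist a b) dist_nonneg
    (by rwa [sub_zero]) (hTa ▸ (hfree a).2 ha) (hTb ▸ (hfree b).2 hb)
    (hTa ▸ hTb ▸ (hcomp ha).not.2 hsep)
  refine ⟨T.symm w, fun e he e' he' hee' => ?_⟩
  rw [← T.dist_eq e, ← T.dist_eq e', ← T.dist_eq e e', T.apply_symm_apply]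
  exact hw (T e) (hTa ▸ (hcomp ha).2 he) (T e') (hTb ▸ (hcomp hb).2 he') (by rwa [T.dist_eq])

end Separation

section Interference

theorem exists_mutualInterference_subset_ball {W : Set Plane} (hW : IsClosed W)
    (hWc : IsPreconnected Wᶜ) {C C' : Set Plane} (hC : IsFreeComponent {x | ball x 1 ⊆ W} C)
    (hC' : IsFreeComponent {x | ball x 1 ⊆ W} C') (hne : C ≠ C') :
    ∃ w, mutualInterference C C' ⊆ ball w 2 := by
  rw [setOf_ball_subset_eq_compl_thickening] at hC hC'
  obtain ⟨x, -, rfl⟩ := hC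
  obtain ⟨x', -, rfl⟩ := hC'
  by_cases hinterfere : ∃ a ∈ connectedComponentIn (thickening 1 Wᶜ)ᶜ x,
    ∃ b ∈ connectedComponentIn (thickening 1 Wᶜ)ᶜ x', dist a b < 2
  swap
  · push Not at hinterfere
    refine ⟨0, ?_⟩
    rintro c (⟨hc, d, hcd, hd⟩ | ⟨hc, d, hcd, hd⟩)
    · exact absurd (mem_ball'.1 hcd) (hinterfere c hc d hd).not_gt
    · exact absurd (mem_ball.1 hcd) (hinterfere d hd c hc).not_gt
  obtain ⟨a, ha, b, hb, hab⟩ := hinterfere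
  have hsep : b ∉ connectedComponentIn (thickening 1 Wᶜ)ᶜ a := fun hba => hne <| by
    rw [connectedComponentIn_eq ha, connectedComponentIn_eq hb, connectedComponentIn_eq hba]
  obtain ⟨w, hw⟩ := exists_dist_lt_dist_of_notMem_connectedComponentIn hW.isOpen_compl hWc
    (by rwa [mul_one]) (connectedComponentIn_subset _ _ ha) (connectedComponentIn_subset _ _ hb)
    hsep
  rw [← connectedComponentIn_eq ha, ← connectedComponentIn_eq hb, mul_one] at hw
  refine ⟨w, ?_⟩
  rintro c (⟨hc, d, hcd, hd⟩ | ⟨hc, d, hcd, hd⟩)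
  · rw [mem_ball'] at hcd
    exact (hw c hc d hd hcd).1.trans hcd
  · rw [mem_ball] at hcd
    exact (hw d hd c hc hcd).2.trans hcd

theorem interference_subsingleton_general {W : Set Plane} (hW : IsClosed W)
    (hWc : IsPreconnected Wᶜ) {C C' : Set Plane} (hC : IsFreeComponent {x | ball x 1 ⊆ W} C)
    (hC' : IsFreeComponent {x | ball x 1 ⊆ W} C') (hne : C ≠ C') {S : Set Plane}
    (hsep : ∀ s₁ ∈ S, ∀ s₂ ∈ S, s₁ ≠ s₂ → 4 ≤ dist s₁ s₂) :
    (S ∩ mutualInterference C C').Subsingleton := by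
  obtain ⟨w, hw⟩ := exists_mutualInterference_subset_ball hW hWc hC hC' hne
  rintro s₁ ⟨hs₁, hi₁⟩ s₂ ⟨hs₂, hi₂⟩
  by_contra hs
  linarith [hsep s₁ hs₁ s₂ hs₂ hs, dist_triangle_right s₁ s₂ w, mem_ball.1 (hw hi₁),
    mem_ball.1 (hw hi₂)]

theorem SimplePolygon.isCompact_bdryCurve (P : SimplePolygon) : IsCompact P.bdryCurve :=
  isCompact_Icc.image P.continuous

theorem SimplePolygon.isClosed_region (P : SimplePolygon) : IsClosed P.region :=
  isClosed_fillHoles P.isCompact_bdryCurve.isClosed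

theorem SimplePolygon.isPreconnected_compl_region (P : SimplePolygon) :
    IsPreconnected P.regionᶜ :=
  isPreconnected_compl_fillHoles (by rw [← Module.finrank_eq_rank]; simp)
    P.isCompact_bdryCurve.isBounded

end Interference

/-- If the points of `S ⊆ F` are pairwise at distance at least 4, then the mutual
interference set of two distinct free-space components contains at most one point of `S`. -/
theorem interference_subsingleton (P : SimplePolygon) (C C' : Set Plane)
    (hC : IsFreeComponent P.freeSpace C) (hC' : IsFreeComponent P.freeSpace C')
    (hne : C ≠ C') (S : Set Plane) (hS : S ⊆ P.freeSpace)
    (hsep : ∀ s₁ ∈ S, ∀ s₂ ∈ S, s₁ ≠ s₂ → 4 ≤ dist s₁ s₂) :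
    (S ∩ mutualInterference C C').Subsingleton :=
  interference_subsingleton_general P.isClosed_region P.isPreconnected_compl_region hC hC' hne hsep
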